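/- arXiv:1709.01705 — 7 statements merged into one kernel-verified Lean document; each statement's English description precedes it below -/
import Mathlib

section
/- Let R be a commutative ring, let S be a commutative R-algebra that is formally étale over R, and let C be a commutative R-algebra with an ideal J such that C is J-adically complete. Then for every n ≥ 1, composition with the quotient map C → C/J^n induces a bijection from the set of R-algebra homomorphisms S → C to the set of R-algebra homomorphisms S → C/J^n. -/
/-!
Everything is reduced to the quotient `C ⧸ J`. Unramifiedness makes a map `S → B` determined by its
reduction modulo a nilpotent ideal, or modulo an ideal whose powers have zero intersection; the
latter applies to `J` and gives injectivity. For surjectivity, reduce `h : S → C ⧸ J ^ n` to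
`S → C ⧸ J` and lift that to `g : S → C`, using formal smoothness and completeness
(`Algebra.FormallySmooth.exists_mkₐ_comp_eq_of_isAdicComplete`). The maps `h` and
`g mod J ^ n` agree modulo the kernel of `C ⧸ J ^ n → C ⧸ J`, which is nilpotent, so they are equal.
-/

/-- Let `R` be a commutative ring, `S` a formally étale commutative `R`-algebra, and `C` a
commutative `R`-algebra which is `J`-adically complete for an ideal `J ⊆ C`. Then for every
`n ≥ 1`, composition with the quotient map `C → C/Jⁿ` induces a bijection
`Hom_{R-alg}(S, C) → Hom_{R-alg}(S, C/Jⁿ)`. -/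
theorem bijective_algHom_comp_quotient_of_formallyEtale_of_adicComplete
    {R S C : Type u} [CommRing R] [CommRing S] [CommRing C]
    [Algebra R S] [Algebra R C] [Algebra.FormallyEtale R S]
    (J : Ideal C) [IsAdicComplete J C] (n : ℕ) (hn : 1 ≤ n) :
    Function.Bijective
      (fun f : S →ₐ[R] C => (Ideal.Quotient.mkₐ R (J ^ n)).comp f) := by
  have hle : J ^ n ≤ J := Ideal.pow_le_self (by omega)
  constructor
  · intro f g hfg
    have hJ : ⨅ i, J ^ i = ⊥ := by
      refine eq_bot_iff.mpr fun x hx => ?_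
      rw [Ideal.mem_iInf] at hx
      exact IsHausdorff.haus (I := J) inferInstance x fun i => by
        simpa [SModEq.zero] using hx i
    refine Algebra.FormallyUnramified.ext_of_iInf J hJ fun x => ?_
    have hx : Ideal.Quotient.mk (J ^ n) (f x) = Ideal.Quotient.mk (J ^ n) (g x) :=
      AlgHom.congr_fun hfg x
    rw [Ideal.Quotient.eq] at hx ⊢
    exact hle hx
  · intro h
    obtain ⟨g, hg⟩ := Algebra.FormallySmooth.exists_mkₐ_comp_eq_of_isAdicComplete
      ((Ideal.Quotient.factorₐ R hle).comp h)
    refine ⟨g, ?_⟩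
    refine Algebra.FormallyUnramified.ext' (Ideal.Quotient.factor hle) ⟨n, ?_⟩ _ _ fun x => ?_
    · rw [Ideal.Quotient.factor_ker, ← Ideal.map_pow]
      exact Ideal.map_quotient_self _
    · exact AlgHom.congr_fun hg x
end

section
/- Let R be a commutative ring and S a commutative R-algebra. If every finitely generated R-submodule of S is contained in an R-submodule of S that is finitely presented as an R-module, then the canonical map ω_{S/R} : R[[t]] ⊗_R S → S[[t]] is injective. -/
/-!
Every element of `R[[t]] ⊗[R] S` comes from `R[[t]] ⊗[R] M` for some finitely generated submodule
`M` of `S`, hence from `R[[t]] ⊗[R] N` with `N ⊇ M` finitely presented. As `N → S` is injective,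
it is enough that an element of `R[[t]] ⊗[R] N` vanishes as soon as all its coefficients in `N` do
(`tensor_eq_zero_of_coeff_eq_zero`). Given a presentation `R^m → R^n → N → 0`, write such an element
as `∑ i, F i ⊗ s i`, where `s i` are the images of the basis vectors. In each degree `d` the vector
of `d`-th coefficients of the `F i` is a relation between the `s i`, so it comes from `R^m`. Choosing
a preimage in every degree independently gives power series `G j` with `F i = ∑ j, a i j • G j`,
where `a` is the matrix of `R^m → R^n`; since `∑ i, a i j • s i = 0` for every `j`, the element
is zero.
-/

open scoped TensorProduct

/-- The coefficientwise map `R[[t]] → S[[t]]` as an `R`-algebra homomorphism. -/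
noncomputable def PowerSeries.mapAlgHom' (R S : Type u) [CommRing R] [CommRing S]
    [Algebra R S] : PowerSeries R →ₐ[R] PowerSeries S :=
  { PowerSeries.map (algebraMap R S) with
    commutes' := fun r => by
      simp [PowerSeries.algebraMap_apply, PowerSeries.map_C] }

/-- The canonical `R`-algebra homomorphism `ω_{S/R} : R[[t]] ⊗[R] S → S[[t]]`, determined by
sending an elementary tensor `f ⊗ s` to the product of the constant series `s` with the
series obtained by mapping each coefficient of `f` into `S` along `R → S`. -/
noncomputable def omegaPowerSeries (R S : Type u) [CommRing R] [CommRing S] [Algebra R S] :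
    PowerSeries R ⊗[R] S →ₐ[R] PowerSeries S :=
  Algebra.TensorProduct.productMap (PowerSeries.mapAlgHom' R S)
    (IsScalarTower.toAlgHom R S (PowerSeries S))

/-- The map `R[[t]] ⊗[R] N → N` taking the `d`-th coefficient. -/
noncomputable def tensorCoeff (R : Type*) [CommRing R] (N : Type*) [AddCommGroup N] [Module R N]
    (d : ℕ) : PowerSeries R ⊗[R] N →ₗ[R] N :=
  (TensorProduct.lid R N).toLinearMap ∘ₗ (PowerSeries.coeff (R := R) d).rTensor N

theorem tensorCoeff_tmul (R : Type*) [CommRing R] (N : Type*) [AddCommGroup N] [Module R N]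
    (d : ℕ) (F : PowerSeries R) (n : N) :
    tensorCoeff R N d (F ⊗ₜ n) = PowerSeries.coeff d F • n := by
  simp [tensorCoeff]

theorem apply_eq_sum_smul_single {R N : Type*} [CommRing R] [AddCommGroup N] [Module R N] {n : ℕ}
    (f : (Fin n → R) →ₗ[R] N) (v : Fin n → R) : f v = ∑ i, v i • f (Pi.single i 1) := by
  simp_rw [← map_smul, ← map_sum]
  congr 1
  ext j
  simp [Finset.sum_apply, Pi.single_apply]

theorem exists_eq_sum_tmul_of_surjective {R P N : Type*} [CommRing R] [AddCommGroup P] [Module R P]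
    [AddCommGroup N] [Module R N] {n : ℕ} (f : (Fin n → R) →ₗ[R] N) (hf : Function.Surjective f)
    (y : P ⊗[R] N) : ∃ F : Fin n → P, y = ∑ i, F i ⊗ₜ f (Pi.single i 1) := by
  induction y with
  | zero => exact ⟨0, by simp⟩
  | tmul p x =>
    obtain ⟨v, rfl⟩ := hf x
    refine ⟨fun i => v i • p, ?_⟩
    simp_rw [TensorProduct.smul_tmul, ← TensorProduct.tmul_sum, ← apply_eq_sum_smul_single]
  | add y z hy hz =>
    obtain ⟨F, rfl⟩ := hy
    obtain ⟨G, rfl⟩ := hz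
    exact ⟨F + G, by simp [TensorProduct.add_tmul, Finset.sum_add_distrib]⟩

/-- For finitely presented `N`, the map `R[[t]] ⊗[R] N → N[[t]]` is injective: relations between
the generators, chosen degree by degree, assemble to power series because there are only finitely
many generating relations. -/
theorem tensor_eq_zero_of_coeff_eq_zero {R N : Type*} [CommRing R] [AddCommGroup N] [Module R N]
    [Module.FinitePresentation R N] (y : PowerSeries R ⊗[R] N)
    (hy : ∀ d, tensorCoeff R N d y = 0) : y = 0 := by
  obtain ⟨n, m, f, g, hf, hfg⟩ := Module.FinitePresentation.exists_fin' R N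
  obtain ⟨F, rfl⟩ := exists_eq_sum_tmul_of_surjective f hf y
  have hc : ∀ d, ∃ c, g c = fun i => PowerSeries.coeff d (F i) := by
    intro d
    refine (hfg _).1 ?_
    rw [apply_eq_sum_smul_single]
    simpa [tensorCoeff_tmul] using hy d
  choose c hc using hc
  let G : Fin m → PowerSeries R := fun j => PowerSeries.mk fun d => c d j
  have hF : ∀ i, F i = ∑ j, g (Pi.single j 1) i • G j := by
    intro i
    ext d
    have := congrFun (hc d) i
    rw [apply_eq_sum_smul_single] at this
    rw [← this, map_sum, Finset.sum_apply]
    refine Finset.sum_congr rfl fun j _ => ?_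
    simp [G, mul_comm]
  have hrel : ∀ j, ∑ i, g (Pi.single j 1) i • f (Pi.single i 1) = 0 := by
    intro j
    rw [← hfg.apply_apply_eq_zero (Pi.single j 1), apply_eq_sum_smul_single f (g _)]
  simp_rw [hF, TensorProduct.sum_tmul, TensorProduct.smul_tmul]
  rw [Finset.sum_comm]
  simp_rw [← TensorProduct.tmul_sum, hrel, TensorProduct.tmul_zero, Finset.sum_const_zero]

theorem coeff_omegaPowerSeries {R S : Type u} [CommRing R] [CommRing S] [Algebra R S]
    (N : Submodule R S) (d : ℕ) (y : PowerSeries R ⊗[R] N) :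
    PowerSeries.coeff d (omegaPowerSeries R S (N.subtype.lTensor (PowerSeries R) y)) =
      (tensorCoeff R N d y : S) := by
  induction y with
  | zero => simp
  | tmul F s =>
    simp [tensorCoeff_tmul, omegaPowerSeries, PowerSeries.mapAlgHom', Algebra.smul_def]
  | add y z hy hz => simp [hy, hz]

/-- If every finitely generated `R`-submodule of `S` is contained in an `R`-submodule of `S`
which is finitely presented as an `R`-module, then `ω_{S/R} : R[[t]] ⊗[R] S → S[[t]]`
is injective. -/
theorem omegaPowerSeries_injective (R S : Type u) [CommRing R] [CommRing S] [Algebra R S]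
    (h : ∀ M : Submodule R S, M.FG →
      ∃ N : Submodule R S, M ≤ N ∧ Module.FinitePresentation R N) :
    Function.Injective (omegaPowerSeries R S) := by
  rw [injective_iff_map_eq_zero]
  intro x hx
  obtain ⟨M, hM, hxM⟩ :=
    TensorProduct.exists_finite_submodule_right_of_setFinite {x} (Set.finite_singleton x)
  obtain ⟨z, rfl⟩ := hxM rfl
  obtain ⟨N, hMN, hN⟩ := h M (Module.Finite.iff_fg.1 hM)
  rw [← Submodule.subtype_comp_inclusion M N hMN, LinearMap.lTensor_comp_apply] at hx ⊢
  rw [tensor_eq_zero_of_coeff_eq_zero ((Submodule.inclusion hMN).lTensor (PowerSeries R) z),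
    map_zero]
  intro d
  apply Subtype.ext
  rw [← coeff_omegaPowerSeries, hx]
  simp
end

section
/- Let B be a commutative ring. If a formal Laurent series e ∈ B((t)) satisfies e² = e, then e is a constant series: there exists an idempotent e₀ ∈ B (so e₀² = e₀) such that e is the image of e₀ under the constant embedding B → B((t)). -/
/-!
Over a domain `D` the ring `D((t))` is a domain, so its only idempotents are `0` and `1`. Reducing
modulo every prime of `B`, all nonconstant coefficients of an idempotent `e` are therefore
nilpotent. Only finitely many coefficients have negative index, so the principal part `N` of `e`
is a nilpotent series, and `g = e - N` is a power series that is idempotent modulo nilpotents.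
Idempotents lift along the nilradical of `B⟦X⟧`, giving an idempotent power series `g'` with
`g - g'`, hence `e - g'`, nilpotent. Two idempotents with nilpotent difference are equal, so
`e = g'` is a power series. Finally, an idempotent power series `f` is constant: the difference
`d = f - C f₀` of two idempotents satisfies `d ^ 3 = d` and is divisible by `X`, hence by every
power of `X`.
-/

/-- The nonconstant coefficients of an idempotent vanish modulo every prime, since a Laurent series
ring over a domain is a domain. -/
lemma LaurentSeries.isNilpotent_coeff_of_isIdempotentElem {B : Type*} [CommRing B]
    {e : LaurentSeries B} (he : IsIdempotentElem e) {n : ℤ} (hn : n ≠ 0) :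
    IsNilpotent (e.coeff n) := by
  rw [nilpotent_iff_mem_prime]
  intro P hP
  rw [← Ideal.Quotient.eq_zero_iff_mem]
  let φ : B →+* B ⧸ P := Ideal.Quotient.mk P
  have h : IsIdempotentElem (HahnSeries.map e φ) := by
    have h1 := HahnSeries.map_mul (φ : B →ₙ+* B ⧸ P) (x := e) (y := e)
    rw [he.eq] at h1
    exact h1.symm
  change (HahnSeries.map e φ).coeff n = 0
  rcases IsIdempotentElem.iff_eq_zero_or_one.mp h with h0 | h1
  · rw [h0, HahnSeries.coeff_zero]
  · rw [h1, HahnSeries.coeff_one, if_neg hn]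

/-- An idempotent power series is constant. -/
lemma PowerSeries.eq_C_of_isIdempotentElem {B : Type*} [CommRing B]
    {f : PowerSeries B} (hf : IsIdempotentElem f) :
    f = PowerSeries.C (PowerSeries.constantCoeff f) := by
  set c : PowerSeries B := PowerSeries.C (PowerSeries.constantCoeff f) with hc
  have hcc : IsIdempotentElem c :=
    (hf.map (PowerSeries.constantCoeff (R := B))).map (PowerSeries.C (R := B))
  have h3 : (f - c) ^ 3 = f - c := by
    have h1 : f * f = f := hf
    have h2 : c * c = c := hcc
    linear_combination (f - 3 * c + 1) * h1 + (3 * f - c - 1) * h2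
  have hX : PowerSeries.X ∣ f - c := by
    rw [PowerSeries.X_dvd_iff]; simp [hc]
  have hpow : ∀ n : ℕ, PowerSeries.X ^ n ∣ f - c := by
    intro n
    induction n with
    | zero => simp
    | succ k ih =>
      rw [← h3, pow_succ, pow_succ (f - c) 2, sq]
      exact mul_dvd_mul (ih.mul_right _) hX
  rw [← sub_eq_zero]
  ext n
  simpa using PowerSeries.X_pow_dvd_iff.mp (hpow (n + 1)) n (Nat.lt_succ_self n)

/-- An idempotent Laurent series differs from some power series by a nilpotent, namely by its
principal part. -/
lemma LaurentSeries.exists_isNilpotent_sub_of_isIdempotentElem {B : Type*} [CommRing B]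
    {e : LaurentSeries B} (he : IsIdempotentElem e) :
    ∃ g : PowerSeries B, IsNilpotent (e - HahnSeries.ofPowerSeries ℤ B g) := by
  refine ⟨PowerSeries.mk fun n => e.coeff n, ?_⟩
  have hN : e - HahnSeries.ofPowerSeries ℤ B (PowerSeries.mk fun n => e.coeff n) =
      ∑ n ∈ Finset.Ico e.order 0, HahnSeries.single n (e.coeff n) := by
    ext i
    have hs : ∑ n ∈ Finset.Ico e.order 0, (HahnSeries.single n (e.coeff n)).coeff i =
        if i ∈ Finset.Ico e.order 0 then e.coeff i else 0 := by
      split_ifs with hi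
      · rw [Finset.sum_eq_single_of_mem i hi fun n _ hn =>
          HahnSeries.coeff_single_of_ne hn.symm, HahnSeries.coeff_single_same]
      · exact Finset.sum_eq_zero fun n hn =>
          HahnSeries.coeff_single_of_ne fun h => hi (h ▸ hn)
    rw [HahnSeries.coeff_sub, PowerSeries.coeff_coe, HahnSeries.coeff_sum, hs]
    simp only [Finset.mem_Ico, PowerSeries.coeff_mk]
    by_cases hi : i < 0
    · by_cases ho : e.order ≤ i
      · simp [hi, ho]
      · simp [hi, ho, HahnSeries.coeff_eq_zero_of_lt_order (not_le.mp ho)]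
    · simp [hi, abs_of_nonneg (not_lt.mp hi)]
  rw [hN]
  refine isNilpotent_sum fun n hn => ?_
  obtain ⟨k, hk⟩ := LaurentSeries.isNilpotent_coeff_of_isIdempotentElem he
    (Finset.mem_Ico.mp hn).2.ne
  exact ⟨k, by rw [HahnSeries.single_pow, hk, HahnSeries.single_eq_zero]⟩

/-- An idempotent Laurent series over a commutative ring `B` is constant: if
`e ∈ B((t))` satisfies `e² = e`, then there is an idempotent `e₀ ∈ B` such that `e` is the
constant series `C e₀`. -/
theorem LaurentSeries.eq_C_of_idempotent {B : Type*} [CommRing B]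
    (e : LaurentSeries B) (he : e ^ 2 = e) :
    ∃ e₀ : B, e₀ ^ 2 = e₀ ∧ e = HahnSeries.C e₀ := by
  have he' : IsIdempotentElem e := by rwa [IsIdempotentElem, ← sq]
  obtain ⟨g, hg⟩ := LaurentSeries.exists_isNilpotent_sub_of_isIdempotentElem he'
  let ι := HahnSeries.ofPowerSeries ℤ B
  have hι : Function.Injective ι := HahnSeries.ofPowerSeries_injective
  have hgg : IsNilpotent (g * g - g) := by
    rw [← IsNilpotent.map_iff hι]
    have : ι (g * g - g) = (e - ι g) * (1 - e - ι g) := by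
      rw [map_sub, map_mul]
      linear_combination he
    rw [this]
    exact (Commute.all _ _).isNilpotent_mul_right hg
  let q := Ideal.Quotient.mk (nilradical (PowerSeries B))
  have hq : ∀ x ∈ RingHom.ker q, IsNilpotent x := fun x hx =>
    mem_nilradical.mp (by rwa [Ideal.mk_ker] at hx)
  obtain ⟨g', hg', hgq⟩ := exists_isIdempotentElem_eq_of_ker_isNilpotent q hq (q g) ⟨g, rfl⟩ (by
    rw [IsIdempotentElem, ← map_mul]
    exact Ideal.Quotient.eq.mpr (mem_nilradical.mpr hgg))
  have hsub : IsNilpotent (g - g') := hq _ (by rw [RingHom.mem_ker, map_sub, hgq, sub_self])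
  have heg : e = ι g' := by
    refine eq_of_isNilpotent_sub_of_isIdempotentElem he' (hg'.map ι) ?_
    have : e - ι g' = (e - ι g) + ι (g - g') := by rw [map_sub]; ring
    rw [this]
    exact (Commute.all _ _).isNilpotent_add hg (hsub.map ι)
  refine ⟨PowerSeries.constantCoeff g', ?_, ?_⟩
  · rw [sq, ← map_mul, hg'.eq]
  · rw [heg, ← PowerSeries.coe_C, ← PowerSeries.eq_C_of_isIdempotentElem hg']
end

section
/- Let p be a prime and B a commutative ring of characteristic p. If u ∈ B((t)) is a formal Laurent series such that the coefficient of t^q in u is 0 for every integer q ≥ 0, and u^p = u, then u = 0. -/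
/-!
The support of `u` is bounded below and lies in the negative degrees, so `u` is a finite sum
`∑ aₘ tᵐ` with `m < 0`. Additivity of Frobenius gives `u = uᵖ = ∑ aₘᵖ tᵖᵐ`. Hence a nonzero
coefficient `aₙ` forces `n = pm` with `aₘ ≠ 0` and `|m| < |n|`, and this descent in the negative
integers cannot go on forever. Only the additivity of Frobenius is used, so `B` may have nilpotents.
-/

/-- Let `p` be a prime and `B` a commutative ring of characteristic `p`. If a formal
Laurent series `u ∈ B((t))` has vanishing coefficients in all degrees `q ≥ 0` and
satisfies `uᵖ = u`, then `u = 0`. -/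
theorem LaurentSeries.eq_zero_of_pow_char_eq_self_of_coeff_nonneg_eq_zero
    {p : ℕ} (hp : p.Prime) {B : Type*} [CommRing B] [CharP B p]
    (u : LaurentSeries B) (hcoeff : ∀ q : ℤ, 0 ≤ q → u.coeff q = 0)
    (hu : u ^ p = u) : u = 0 := by
  have : Fact p.Prime := ⟨hp⟩
  have : CharP (LaurentSeries B) p :=
    charP_of_injective_ringHom (f := (HahnSeries.C : B →+* HahnSeries ℤ B))
      HahnSeries.C_injective p
  have hsum : u = ∑ m ∈ Finset.Icc u.order (-1), HahnSeries.single m (u.coeff m) := by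
    ext n
    rw [HahnSeries.coeff_sum]
    by_cases h : n ∈ Finset.Icc u.order (-1)
    · rw [Finset.sum_eq_single_of_mem n h fun m _ hm => HahnSeries.coeff_single_of_ne hm.symm,
        HahnSeries.coeff_single_same]
    · rw [Finset.sum_eq_zero fun m hm =>
        HahnSeries.coeff_single_of_ne fun hnm : n = m => h (hnm ▸ hm)]
      by_contra hne
      have h1 := HahnSeries.order_le_of_coeff_ne_zero hne
      have h2 : ¬ 0 ≤ n := fun h => hne (hcoeff n h)
      exact h (Finset.mem_Icc.2 ⟨h1, by omega⟩)
  have hpow : u = ∑ m ∈ Finset.Icc u.order (-1),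
      HahnSeries.single (p • m) (u.coeff m ^ p) := by
    have h := congrArg (· ^ p) hsum
    simpa only [hu, sum_pow_char p, HahnSeries.single_pow] using h
  have key : ∀ k : ℕ, u.coeff (-(k : ℤ)) = 0 := by
    intro k
    induction k using Nat.strong_induction_on with
    | _ k ih =>
      rw [hpow, HahnSeries.coeff_sum]
      refine Finset.sum_eq_zero fun m hm => ?_
      rw [HahnSeries.coeff_single]
      split_ifs with h
      · have hm' := (Finset.mem_Icc.1 hm).2
        have hp2 : (2 : ℤ) ≤ p := by exact_mod_cast hp.two_le
        rw [nsmul_eq_mul] at h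
        have hlt : m.natAbs < k := by
          zify
          rw [abs_of_neg (by omega)]
          nlinarith
        have h0 := ih _ hlt
        rw [show -((m.natAbs : ℕ) : ℤ) = m by omega] at h0
        rw [h0, zero_pow hp.ne_zero]
      · rfl
  ext n
  rcases le_total 0 n with h | h
  · simpa using hcoeff n h
  · have h0 := key n.natAbs
    rw [show -((n.natAbs : ℕ) : ℤ) = n by omega] at h0
    simpa using h0
end

section
/- Let p be a prime and B a commutative ring of characteristic p. Let v ∈ B((t)) be a formal Laurent series such that the coefficient of t^q in v is 0 for every integer q ≥ 0, and suppose that the coefficient of t^q in v^p − v is 0 for every integer q divisible by p. Then every coefficient of v is nilpotent. -/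
/-!
The Frobenius of `B((t))` raises coefficients to the `p`-th power and multiplies exponents by `p`,
so the hypothesis in degree `p * q` reads `v_{pq} = v_q ^ p`. Iterating, `v_q ^ (p ^ k) = v_{p ^ k q}`.
For `q < 0` the exponents `p ^ k q` tend to `-∞`, hence eventually leave the support of `v`, and
`v_q` is nilpotent; for `q ≥ 0` the coefficient is zero. As `v` is supported in finitely many
(negative) degrees, the formula for the Frobenius follows from additivity on a finite sum of
monomials.
-/

/-- The Frobenius on a Laurent series with no terms of nonnegative degree. -/
lemma LaurentSeries.coeff_mul_pow_char_of_neg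
    {p : ℕ} (hp : p.Prime) {B : Type*} [CommRing B] [CharP B p]
    (v : LaurentSeries B) (hcoeff : ∀ q : ℤ, 0 ≤ q → v.coeff q = 0) (n : ℤ) :
    (v ^ p).coeff (p * n) = v.coeff n ^ p := by
  have : Fact p.Prime := ⟨hp⟩
  have : CharP (LaurentSeries B) p :=
    charP_of_injective_ringHom (f := (HahnSeries.C : B →+* LaurentSeries B))
      HahnSeries.C_injective p
  have hp0 : (p : ℤ) ≠ 0 := by exact_mod_cast hp.ne_zero
  have hz (m : ℤ) (hm : m ∉ Finset.Ico v.order 0) : v.coeff m = 0 := by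
    rw [Finset.mem_Ico] at hm
    by_cases h0 : 0 ≤ m
    · exact hcoeff m h0
    · exact HahnSeries.coeff_eq_zero_of_lt_order (by omega)
  have hv : v = ∑ q ∈ Finset.Ico v.order 0, HahnSeries.single q (v.coeff q) := by
    ext m
    rw [HahnSeries.coeff_sum, Finset.sum_eq_single m, HahnSeries.coeff_single_same]
    · exact fun q _ hq => HahnSeries.coeff_single_of_ne hq.symm
    · intro hm
      rw [HahnSeries.coeff_single_same, hz m hm]
  have hpow : v ^ p =
      ∑ q ∈ Finset.Ico v.order 0, HahnSeries.single (p * q) (v.coeff q ^ p) := by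
    conv_lhs => rw [hv, sum_pow_char]
    simp only [HahnSeries.single_pow, nsmul_eq_mul]
  rw [hpow, HahnSeries.coeff_sum, Finset.sum_eq_single n, HahnSeries.coeff_single_same]
  · exact fun q _ hq => HahnSeries.coeff_single_of_ne fun h => hq (mul_left_cancel₀ hp0 h).symm
  · intro hn
    rw [HahnSeries.coeff_single_same, hz n hn, zero_pow hp.ne_zero]

/-- Let `p` be a prime and `B` a commutative ring of characteristic `p`. Let `v ∈ B((t))`
be a formal Laurent series with vanishing coefficients in all degrees `q ≥ 0`, and suppose
that the coefficient of `t^q` in `vᵖ − v` vanishes for every integer `q` divisible by `p`.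
Then every coefficient of `v` is nilpotent. -/
theorem LaurentSeries.coeff_isNilpotent_of_pow_char_sub_self
    {p : ℕ} (hp : p.Prime) {B : Type*} [CommRing B] [CharP B p]
    (v : LaurentSeries B) (hcoeff : ∀ q : ℤ, 0 ≤ q → v.coeff q = 0)
    (hdvd : ∀ q : ℤ, (p : ℤ) ∣ q → (v ^ p - v).coeff q = 0) :
    ∀ q : ℤ, IsNilpotent (v.coeff q) := by
  intro q
  have hstep (n : ℤ) : v.coeff (p * n) = v.coeff n ^ p := by
    have h := hdvd (p * n) (dvd_mul_right _ _)
    rw [HahnSeries.coeff_sub, LaurentSeries.coeff_mul_pow_char_of_neg hp v hcoeff] at h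
    exact (sub_eq_zero.mp h).symm
  have hiter (k : ℕ) : v.coeff q ^ p ^ k = v.coeff (p ^ k * q) := by
    induction k with
    | zero => simp
    | succ k ih => rw [pow_succ, pow_mul, ih, ← hstep, pow_succ', mul_assoc]
  by_cases hq : 0 ≤ q
  · rw [hcoeff q hq]
    exact IsNilpotent.zero
  · -- any `k` with `-p ^ k < v.order` works, and `p ^ k > k`
    let k := v.order.natAbs
    refine ⟨p ^ k, ?_⟩
    rw [hiter]
    apply HahnSeries.coeff_eq_zero_of_lt_order
    have hk : (k : ℤ) < (p : ℤ) ^ k := by exact_mod_cast Nat.lt_pow_self hp.one_lt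
    have hk' : -(k : ℤ) ≤ v.order := by omega
    nlinarith
end

section
/- Let k be a field, n a positive integer with (n : k) ≠ 0, and B a commutative k-algebra. If a formal Laurent series b ∈ B((t)) satisfies b^n = 1, then b is a constant series: there exists b₀ ∈ B with b₀^n = 1 such that b is the image of b₀ under the constant embedding B → B((t)). -/
/-!
Let `u = 1 + X`, a unit of `B⟦X⟧`. The substitution `t ↦ u t` is a multiplicative map from `B((t))`
to `B⟦X⟧((t))`, and so is the coefficientwise inclusion. If `b ^ n = 1`, the images `x` and `y`
of `b` under these two maps are `n`-th roots of unity which agree modulo `X`.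

Since `n` is invertible, expanding `x ^ n = (y + (x - y)) ^ n` to second order shows that
`d = x - y` satisfies `d = d * d * e` for some `e`. Hence divisibility of the coefficients of `d`
by `X ^ j` improves to divisibility by `X ^ (j + 1)`, and `d = 0`
(`LaurentSeries.eq_of_pow_eq_one_of_X_dvd`).

Thus `u ^ m * b_m = b_m` for every `m : ℤ`. If `m ≠ 0`, this gives `(1 + X) ^ |m| * b_m = b_m`, and
comparing the coefficients of `X ^ |m|` gives `b_m = 0`. Unlike formal differentiation, this
works in every characteristic.
-/

namespace LaurentSeries

/-- The series `∑ f_m (u t) ^ m` in `B⟦X⟧((t))` for `f = ∑ f_m t ^ m` in `B((t))` and a unit `u`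
of `B⟦X⟧`. For `u = 1` it is the image of `f` under the coefficientwise inclusion. -/
noncomputable def twistFun {B : Type*} [CommRing B] (u : (PowerSeries B)ˣ)
    (f : LaurentSeries B) : LaurentSeries (PowerSeries B) where
  coeff m := ((u ^ m : (PowerSeries B)ˣ) : PowerSeries B) * PowerSeries.C (f.coeff m)
  isPWO_support' := f.isPWO_support.mono fun m hm => by
    rw [HahnSeries.mem_support]
    intro h0
    simp [h0] at hm

lemma coeff_twistFun {B : Type*} [CommRing B] (u : (PowerSeries B)ˣ) (f : LaurentSeries B)
    (m : ℤ) : (twistFun u f).coeff m =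
      ((u ^ m : (PowerSeries B)ˣ) : PowerSeries B) * PowerSeries.C (f.coeff m) := rfl

lemma support_twistFun {B : Type*} [CommRing B] (u : (PowerSeries B)ˣ) (f : LaurentSeries B) :
    (twistFun u f).support = f.support := by
  ext m
  rw [HahnSeries.mem_support, HahnSeries.mem_support, coeff_twistFun, ne_eq, Units.mul_right_eq_zero,
    map_eq_zero_iff _ PowerSeries.C_injective]

/-- The substitution `t ↦ u t` as a multiplicative map. -/
noncomputable def twist {B : Type*} [CommRing B] (u : (PowerSeries B)ˣ) :
    LaurentSeries B →* LaurentSeries (PowerSeries B) where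
  toFun := twistFun u
  map_one' := by
    ext1
    funext m
    by_cases hm : m = 0 <;> simp [coeff_twistFun, HahnSeries.coeff_one, hm]
  map_mul' f g := by
    ext1
    funext m
    rw [coeff_twistFun, HahnSeries.coeff_mul, HahnSeries.coeff_mul, map_sum, Finset.mul_sum]
    simp only [support_twistFun]
    refine Finset.sum_congr rfl fun ij h => ?_
    have h' : ij.1 + ij.2 = m := by simp at h; exact h.2.2
    rw [← h', zpow_add, map_mul, Units.val_mul, coeff_twistFun, coeff_twistFun]
    ring

lemma coeff_twist {B : Type*} [CommRing B] (u : (PowerSeries B)ˣ) (f : LaurentSeries B) (m : ℤ) :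
    (twist u f).coeff m =
      ((u ^ m : (PowerSeries B)ˣ) : PowerSeries B) * PowerSeries.C (f.coeff m) := rfl

lemma dvd_coeff_mul {R : Type*} [CommRing R] {r s : R} {f g : LaurentSeries R}
    (hf : ∀ m, r ∣ f.coeff m) (hg : ∀ m, s ∣ g.coeff m) (m : ℤ) : r * s ∣ (f * g).coeff m := by
  rw [HahnSeries.coeff_mul]
  exact Finset.dvd_sum fun ij _ => mul_dvd_mul (hf _) (hg _)

/-- The second-order expansion of `(y + (x - y)) ^ n` around `y`, solved for `x - y`. -/
lemma exists_sub_eq_mul_sub_mul {R : Type*} [CommRing R] {n : ℕ} (hn : 0 < n)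
    (hu : IsUnit (n : R)) {x y : R} (hx : x ^ n = 1) (hy : y ^ n = 1) :
    ∃ e, x - y = (x - y) * ((x - y) * e) := by
  obtain ⟨k, hk⟩ := Polynomial.powAddExpansion y (x - y) n
  obtain ⟨v, hv⟩ := hu.exists_right_inv
  rw [add_sub_cancel, hx, hy] at hk
  have hy' : y ^ (n - 1) * y = 1 := by rw [pow_sub_one_mul hn.ne', hy]
  refine ⟨-(v * y * k), ?_⟩
  -- `v * y` is inverse to the linear coefficient `n * y ^ (n - 1)`.
  linear_combination (-(v * y)) * hk - (x - y) * hv - n * v * (x - y) * hy'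

/-- Two `n`-th roots of unity in `B⟦X⟧((t))` which agree modulo `X` are equal if `n` is
invertible. -/
lemma eq_of_pow_eq_one_of_X_dvd {B : Type*} [CommRing B] {n : ℕ} (hn : 0 < n)
    (hu : IsUnit (n : B)) {x y : LaurentSeries (PowerSeries B)} (hx : x ^ n = 1) (hy : y ^ n = 1)
    (hX : ∀ m, (PowerSeries.X : PowerSeries B) ∣ (x - y).coeff m) : x = y := by
  have hu' : IsUnit (n : LaurentSeries (PowerSeries B)) := by
    simpa using hu.map ((HahnSeries.C (Γ := ℤ) (R := PowerSeries B)).comp PowerSeries.C)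
  obtain ⟨e, he⟩ := exists_sub_eq_mul_sub_mul hn hu' hx hy
  have key : ∀ j m, (PowerSeries.X : PowerSeries B) ^ j ∣ (x - y).coeff m := by
    intro j
    induction j with
    | zero => simp
    | succ j ih =>
      intro m
      rw [he, pow_succ]
      refine dvd_coeff_mul ih (fun m => ?_) m
      simpa using dvd_coeff_mul (s := 1) hX (fun _ => one_dvd (e.coeff _)) m
  rw [← sub_eq_zero]
  ext m j
  simpa using PowerSeries.X_pow_dvd_iff.1 (key (j + 1) m) j j.lt_succ_self

end LaurentSeries

/-- Let `k` be a field, `n` a positive integer with `(n : k) ≠ 0` and `B` a commutative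
`k`-algebra. If a formal Laurent series `b ∈ B((t))` satisfies `bⁿ = 1`, then `b` is a
constant series: `b = C b₀` for some `b₀ ∈ B` with `b₀ⁿ = 1`. -/
theorem LaurentSeries.eq_C_of_pow_eq_one {k : Type*} [Field k] {n : ℕ} (hn : 0 < n)
    (hnk : (n : k) ≠ 0) {B : Type*} [CommRing B] [Algebra k B]
    (b : LaurentSeries B) (hb : b ^ n = 1) :
    ∃ b₀ : B, b₀ ^ n = 1 ∧ b = HahnSeries.C b₀ := by
  have hu : IsUnit (n : B) := by
    simpa using (isUnit_iff_ne_zero.2 hnk).map (algebraMap k B)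
  have hX : IsUnit (1 + PowerSeries.X : PowerSeries B) := by
    simp [PowerSeries.isUnit_iff_constantCoeff]
  obtain ⟨u, hu1⟩ := hX
  have huc : Units.map (PowerSeries.constantCoeff (R := B)).toMonoidHom u = 1 := by
    ext
    simp [hu1]
  have heq : twist u b = twist 1 b := by
    refine eq_of_pow_eq_one_of_X_dvd hn hu ?_ ?_ fun m => ?_
    · rw [← map_pow, hb, map_one]
    · rw [← map_pow, hb, map_one]
    · have hm : PowerSeries.constantCoeff ((u ^ m : (PowerSeries B)ˣ) : PowerSeries B) = 1 := by
        have := congrArg Units.val (map_zpow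
          (Units.map (PowerSeries.constantCoeff (R := B)).toMonoidHom) u m)
        rw [huc, one_zpow] at this
        exact this
      rw [PowerSeries.X_dvd_iff, HahnSeries.coeff_sub, coeff_twist, coeff_twist]
      simp [hm]
  have hcoeff (m : ℤ) (hm : m ≠ 0) : b.coeff m = 0 := by
    have h1 : ((u ^ m : (PowerSeries B)ˣ) : PowerSeries B) * PowerSeries.C (b.coeff m)
        = PowerSeries.C (b.coeff m) := by
      simpa [coeff_twist] using congrArg (fun f => f.coeff m) heq
    have h2 : (1 + PowerSeries.X : PowerSeries B) ^ m.natAbs * PowerSeries.C (b.coeff m)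
        = PowerSeries.C (b.coeff m) := by
      rw [← hu1, ← Units.val_pow_eq_pow_val, ← zpow_natCast]
      rcases Int.natAbs_eq m with h | h
      · rwa [← h]
      · have h' : ((m.natAbs : ℕ) : ℤ) = -m := by omega
        rw [h']
        nth_rewrite 1 [← h1]
        rw [← mul_assoc, ← Units.val_mul, ← zpow_add]
        simp
    have h3 := congrArg (PowerSeries.coeff m.natAbs) h2
    have h4 : PowerSeries.coeff m.natAbs ((1 + PowerSeries.X : PowerSeries B) ^ m.natAbs) = 1 := by
      have h5 : (1 + PowerSeries.X : PowerSeries B) ^ m.natAbs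
          = (((1 + Polynomial.X : Polynomial B) ^ m.natAbs : Polynomial B) : PowerSeries B) := by
        simp
      rw [h5, Polynomial.coeff_coe, Polynomial.coeff_one_add_X_pow]
      simp
    rw [PowerSeries.coeff_mul_C, h4, one_mul, PowerSeries.coeff_C,
      if_neg (Int.natAbs_ne_zero.2 hm)] at h3
    exact h3
  have hbC : b = HahnSeries.C (b.coeff 0) := by
    ext m
    by_cases hm : m = 0
    · simp [hm]
    · simp [hcoeff m hm, HahnSeries.C_apply, HahnSeries.coeff_single_of_ne hm]
  refine ⟨b.coeff 0, HahnSeries.C_injective (Γ := ℤ) ?_, hbC⟩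
  rw [map_pow, ← hbC, hb, map_one]
end

section
/- Let B be a commutative ring and let n and q be positive integers that are coprime. Then there is a B-algebra isomorphism between B((t))[X]/(X^n − t^q) — that is, the quotient of the polynomial ring over the Laurent series ring B((t)) by the polynomial X^n − t^q (AdjoinRoot of X^n − C(t^q)) — and the Laurent series ring B((t)) itself. -/
/-!
Let `φ : B((t)) → B((t))` be the substitution `t ↦ tⁿ`. Since `(t^q)ⁿ = φ(t^q)`, there is a
`B`-algebra map from `B((t))[X]/(Xⁿ − t^q)` to `B((t))` that is `φ` on coefficients and sends
`X` to `t^q`. With `βq = 1 + αn`, this map sends `X^β t^(−α)` to `t`,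
but its bijectivity can be seen on coefficients, without writing down the inverse. Every element of
the source has a representative `∑_{i < n} gᵢ Xⁱ`, and its image is `∑_{i < n} φ(gᵢ) t^(qi)`. As `q`
is invertible modulo `n`, every integer has the form `nk + qj` with `0 ≤ j < n`, and in that degree
only the summand `i = j` contributes, with coefficient `(gⱼ)_k` (`coeff_sum_substPow`). So the
`gᵢ` can be read off from the image, which gives injectivity, and can be prescribed arbitrarily,
which gives surjectivity.
-/

/-- The substitution `t ↦ tⁿ` on Laurent series, for `n > 0`, as a homomorphism of
`B`-algebras. -/
noncomputable def substPow (B : Type*) [CommRing B] (n : ℕ) (hn : 0 < n) :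
    LaurentSeries B →ₐ[B] LaurentSeries B :=
  { HahnSeries.embDomainRingHom (R := B) (AddMonoidHom.mulLeft (n : ℤ))
      (fun _ _ hab => mul_left_cancel₀ (by positivity : (n : ℤ) ≠ 0) hab)
      (fun _ _ => mul_le_mul_iff_right₀ (by positivity : (0 : ℤ) < n)) with
    commutes' := fun b => by
      -- The `B`-algebra structure found on Laurent series factors through power series.
      have hb : algebraMap B (LaurentSeries B) b = HahnSeries.C b :=
        HahnSeries.ofPowerSeries_C b
      rw [hb]
      exact HahnSeries.embDomainRingHom_C }

section

variable {B : Type*} [CommRing B] {n q : ℕ} (hn : 0 < n)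

lemma substPow_single (a : ℤ) (b : B) :
    substPow B n hn (HahnSeries.single a b) = HahnSeries.single (n * a) b :=
  HahnSeries.embDomain_single

lemma coeff_substPow_mul (x : LaurentSeries B) (k : ℤ) :
    (substPow B n hn x).coeff (n * k) = x.coeff k :=
  HahnSeries.embDomain_mk_coeff (f := fun a : ℤ => (n : ℤ) * a) _ _

lemma coeff_substPow_of_not_dvd (x : LaurentSeries B) {m : ℤ} (hm : ¬ (n : ℤ) ∣ m) :
    (substPow B n hn x).coeff m = 0 := by
  refine HahnSeries.embDomain_of_notMem_range ?_
  rintro ⟨k, rfl⟩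
  exact hm ⟨k, rfl⟩

/-- The exponents of `φ(gᵢ) t^(qi)`, where `φ` is the substitution `t ↦ tⁿ`, lie in the residue
class of `qi` modulo `n`. These classes are distinct for `i < n`, so every coefficient of the sum
comes from a single `gᵢ`. -/
lemma coeff_sum_substPow (h : Nat.Coprime n q) (g : ℕ → LaurentSeries B) {j : ℕ} (hj : j < n)
    (k : ℤ) :
    (∑ i ∈ Finset.range n, substPow B n hn (g i) *
      HahnSeries.single (q : ℤ) (1 : B) ^ i).coeff (n * k + q * j) = (g j).coeff k := by
  rw [HahnSeries.coeff_sum, Finset.sum_eq_single j]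
  · have he : (n : ℤ) * k + q * j - j • (q : ℤ) = n * k := by
      rw [nsmul_eq_mul]
      ring
    rw [HahnSeries.single_pow, HahnSeries.coeff_mul_single, one_pow, mul_one, he,
      coeff_substPow_mul]
  · intro i hi hij
    rw [HahnSeries.single_pow, HahnSeries.coeff_mul_single, coeff_substPow_of_not_dvd, zero_mul]
    intro hd
    have hd' : (n : ℤ) ∣ q * ((j : ℤ) - i) := by
      have he : (n : ℤ) * k + q * j - i • (q : ℤ) - n * k = q * ((j : ℤ) - i) := by
        rw [nsmul_eq_mul]
        ring
      exact he ▸ dvd_sub hd (dvd_mul_right (n : ℤ) k)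
    have hdvd : (n : ℤ) ∣ (j : ℤ) - i :=
      (Nat.isCoprime_iff_coprime.mpr h).dvd_of_dvd_mul_left hd'
    have hi' := Finset.mem_range.mp hi
    have := Int.eq_zero_of_abs_lt_dvd hdvd (by rw [abs_lt]; constructor <;> omega)
    omega
  · intro hj'
    exact absurd (Finset.mem_range.mpr hj) hj'

lemma exists_eq_mul_add_mul (hn : 0 < n) (h : Nat.Coprime n q) (m : ℤ) :
    ∃ (k : ℤ) (j : ℕ), j < n ∧ m = n * k + q * j := by
  obtain ⟨a, b, hab⟩ := Nat.isCoprime_iff_coprime.mpr h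
  have hn' : (0 : ℤ) < n := by positivity
  have h0 := Int.emod_nonneg (b * m) hn'.ne'
  have h1 := Int.emod_lt_of_pos (b * m) hn'
  refine ⟨a * m + q * (b * m / n), (b * m % n).toNat, by omega, ?_⟩
  rw [Int.toNat_of_nonneg h0]
  linear_combination (-m) * hab - (q : ℤ) * Int.emod_add_mul_ediv (b * m) n

/-- The Laurent series `∑ₖ f_{nk + c} t^k`, formed from the coefficients of `f` in the residue class
of `c` modulo `n`. -/
noncomputable def residuePart (n : ℕ) (hn : 0 < n) (f : LaurentSeries B) (c : ℤ) :
    LaurentSeries B :=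
  HahnSeries.ofSuppBddBelow (fun k : ℤ => f.coeff (n * k + c)) <| by
    refine ⟨-(|f.order| + |c|), fun k hk => ?_⟩
    by_contra! hlt
    refine hk (HahnSeries.coeff_eq_zero_of_lt_order ?_)
    have h1 := neg_abs_le f.order
    have h2 := le_abs_self c
    have h3 := abs_nonneg f.order
    have h4 := abs_nonneg c
    have hn' : (1 : ℤ) ≤ n := by exact_mod_cast hn
    nlinarith

end

/-- Let `B` be a commutative ring and `n, q` coprime positive integers. Then there is a
`B`-algebra isomorphism `B((t))[X]/(Xⁿ − t^q) ≃ B((t))`, where `B((t))[X]/(Xⁿ − t^q)` is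
the quotient of the polynomial ring over the Laurent series ring `B((t))` by the
polynomial `Xⁿ − t^q`, and both sides are `B`-algebras via the constant embedding
`B → B((t))`.  (Explicitly, if `βq = 1 + αn`, an isomorphism sends the new variable `s`
of the target to `X^β · t^(−α)`.) -/
theorem nonempty_algEquiv_adjoinRoot_pow_sub_single_laurentSeries
    (B : Type*) [CommRing B] (n q : ℕ) (hn : 0 < n) (hq : 0 < q)
    (h : Nat.Coprime n q) :
    Nonempty
      ((AdjoinRoot (Polynomial.X ^ n -
          Polynomial.C (HahnSeries.single (q : ℤ) (1 : B)) : Polynomial (LaurentSeries B)))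
        ≃ₐ[B] LaurentSeries B) := by
  classical
  set s : LaurentSeries B := HahnSeries.single (q : ℤ) (1 : B) with hs
  set P : Polynomial (LaurentSeries B) := Polynomial.X ^ n - Polynomial.C s with hP
  have hroot : P.eval₂ (substPow B n hn : LaurentSeries B →+* LaurentSeries B) s = 0 := by
    simp only [hP, Polynomial.eval₂_sub, Polynomial.eval₂_pow, Polynomial.eval₂_X,
      Polynomial.eval₂_C, RingHom.coe_coe]
    rw [hs, substPow_single, HahnSeries.single_pow, one_pow, nsmul_eq_mul, sub_self]
  refine ⟨AlgEquiv.ofBijective (AdjoinRoot.liftAlgHom P (substPow B n hn) s hroot) ⟨?_, ?_⟩⟩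
  · -- Over the zero ring `P = 0`, so its degree is not `n`; injectivity is trivial there.
    cases subsingleton_or_nontrivial B
    · have : Subsingleton (LaurentSeries B) := ⟨fun x y => by ext; exact Subsingleton.elim _ _⟩
      have : Subsingleton (AdjoinRoot P) := AdjoinRoot.mk_surjective.subsingleton
      exact Function.injective_of_subsingleton _
    rw [injective_iff_map_eq_zero]
    intro a ha
    have hmonic : P.Monic := Polynomial.monic_X_pow_sub_C s hn.ne'
    have hdeg : P.degree = n := Polynomial.degree_X_pow_sub_C hn s
    set r := AdjoinRoot.modByMonicHom hmonic a with hr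
    have har : AdjoinRoot.mk P r = a := AdjoinRoot.mk_leftInverse hmonic a
    have hrdeg : r.degree < n := by
      obtain ⟨p, rfl⟩ := AdjoinRoot.mk_surjective a
      rw [hr, AdjoinRoot.modByMonicHom_mk, ← hdeg]
      exact Polynomial.degree_modByMonic_lt p hmonic
    have hrnat : r.natDegree < n := by
      by_cases h0 : r = 0
      · simpa [h0] using hn
      · exact (Polynomial.natDegree_lt_iff_degree_lt h0).mpr hrdeg
    rw [← har, AdjoinRoot.liftAlgHom_mk, Polynomial.eval₂_eq_sum_range' _
      hrnat] at ha
    have hr0 : r = 0 := by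
      ext j k
      rcases lt_or_ge j n with hj | hj
      · have hc := coeff_sum_substPow hn h r.coeff hj k
        rw [← hc]
        exact congrArg (fun x : LaurentSeries B => x.coeff (n * k + q * j)) ha
      · rw [Polynomial.coeff_eq_zero_of_degree_lt (hrdeg.trans_le (by exact_mod_cast hj)),
          Polynomial.coeff_zero]
    rw [← har, hr0, map_zero]
  · intro f
    refine ⟨AdjoinRoot.mk P (∑ i ∈ Finset.range n,
      Polynomial.C (residuePart n hn f (q * i)) * Polynomial.X ^ i), ?_⟩
    rw [AdjoinRoot.liftAlgHom_mk, Polynomial.eval₂_finsetSum]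
    simp only [Polynomial.eval₂_mul, Polynomial.eval₂_pow, Polynomial.eval₂_X, Polynomial.eval₂_C,
      RingHom.coe_coe]
    ext m
    obtain ⟨k, j, hj, rfl⟩ := exists_eq_mul_add_mul hn h m
    exact coeff_sum_substPow hn h (fun i => residuePart n hn f (q * i)) hj k
end
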